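/- arXiv:2512.13270 — 9 statements merged into one kernel-verified Lean document; each statement's English description precedes it below -/
import Mathlib

section
/- Let f be a density on A × B with respect to μ = μ₁ ⊗ μ₂ with Π₁f > 0 μ₁-a.e., and let f₁ be a density with respect to μ₁. Define the raking half-step φ₁(f)(z₁,z₂) := f₁(z₁)·f(z₁,z₂)/Π₁f(z₁). Then φ₁(f) is a density with respect to μ whose first marginal is f₁ μ₁-a.e., and for every density g with respect to μ satisfying Π₁g = f₁ μ₁-a.e., g = 0 μ-a.e. on {f = 0}, and such that KL(g‖f), KL(g‖φ₁(f)) and KL(f₁‖Π₁f) are finite, the Pythagorean identity KL(g‖f) = KL(g‖φ₁(f)) + KL(f₁‖Π₁f) holds. -/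
/-!
Write `m = Π₁f`. Fibrewise, `φ₁(f)(z₁, ·) = (f₁ z₁ / m z₁) · f(z₁, ·)`, so wherever `m z₁ > 0` its
fibre integral is `f₁ z₁`; Tonelli and Fubini then make `φ₁(f)` an integrable function of total
mass one.

For the Pythagorean identity, `log (g / f) = log (g / φ₁(f)) + log (f₁ / m)` wherever
`g, f, f₁, m` are all nonzero. Multiplying by `g` gives an identity that holds μ-a.e.: `g` vanishes
a.e. where `f` does by assumption, and a.e. where `f₁` does because there its fibre integral is zero
(`ae_eq_zero_of_marginal_eq_zero`). Integrating, the last term only depends on `z₁` apart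
from the factor `g`, which Fubini replaces by its marginal `f₁`.
-/

open MeasureTheory Real

/-- A nonnegative integrable function vanishes almost everywhere above the zero set of its first
marginal. -/
lemma ae_eq_zero_of_marginal_eq_zero {A B : Type*} [MeasurableSpace A] [MeasurableSpace B]
    {μ₁ : Measure A} {μ₂ : Measure B} [SigmaFinite μ₁] [SigmaFinite μ₂]
    {g : A × B → ℝ} {f₁ : A → ℝ} (hg : Measurable g) (hg0 : ∀ z, 0 ≤ g z)
    (hgi : Integrable g (μ₁.prod μ₂)) (hf₁ : Measurable f₁)
    (hmarg : ∀ᵐ z₁ ∂μ₁, (∫ z₂, g (z₁, z₂) ∂μ₂) = f₁ z₁) :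
    ∀ᵐ z ∂(μ₁.prod μ₂), f₁ z.1 = 0 → g z = 0 := by
  have hset : MeasurableSet {z : A × B | f₁ z.1 = 0 → g z = 0} := by
    have h1 : MeasurableSet {z : A × B | f₁ z.1 = 0} :=
      (hf₁.comp measurable_fst) (measurableSet_singleton 0)
    have h2 : MeasurableSet {z : A × B | g z = 0} := hg (measurableSet_singleton 0)
    convert h1.compl.union h2 using 1
    ext z
    simp [imp_iff_not_or]
  rw [Measure.ae_prod_iff_ae_ae hset]
  filter_upwards [hmarg, hgi.prod_right_ae] with z₁ hz hi
  by_cases h0 : f₁ z₁ = 0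
  · rw [h0, integral_eq_zero_iff_of_nonneg (fun z₂ => hg0 (z₁, z₂)) hi] at hz
    filter_upwards [hz] with z₂ h _ using h
  · exact Filter.Eventually.of_forall fun z₂ h => absurd h h0

/-- Let `f` be a density on `A × B` with respect to `μ = μ₁ ⊗ μ₂` with
`Π₁f > 0` μ₁-a.e., and let `f₁` be a density with respect to `μ₁`.  Define the raking
half-step `φ₁(f)(z₁,z₂) := f₁(z₁)·f(z₁,z₂)/Π₁f(z₁)`.  Then `φ₁(f)` is a density with
respect to `μ` whose first marginal is `f₁` μ₁-a.e., and for every density `g` with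
respect to `μ` satisfying `Π₁g = f₁` μ₁-a.e., `g = 0` μ-a.e. on `{f = 0}`, and such that
`KL(g‖f)`, `KL(g‖φ₁(f))` and `KL(f₁‖Π₁f)` are finite, the Pythagorean identity
`KL(g‖f) = KL(g‖φ₁(f)) + KL(f₁‖Π₁f)` holds. -/
theorem raking_half_step_density_and_pythagorean_identity
    {A B : Type*} [MeasurableSpace A] [MeasurableSpace B]
    (μ₁ : Measure A) (μ₂ : Measure B) [SigmaFinite μ₁] [SigmaFinite μ₂]
    (f : A × B → ℝ) (f₁ : A → ℝ)
    (hf_meas : Measurable f) (hf_nonneg : ∀ z, 0 ≤ f z)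
    (hf_one : ∫ z, f z ∂(μ₁.prod μ₂) = 1)
    (hmarg_pos : ∀ᵐ z₁ ∂μ₁, 0 < ∫ z₂, f (z₁, z₂) ∂μ₂)
    (hf₁_meas : Measurable f₁) (hf₁_nonneg : ∀ z₁, 0 ≤ f₁ z₁)
    (hf₁_one : ∫ z₁, f₁ z₁ ∂μ₁ = 1) :
    -- φ₁(f) is a density with respect to μ
    Measurable (fun z : A × B => f₁ z.1 * f z / ∫ z₂, f (z.1, z₂) ∂μ₂)
    ∧ (∀ z : A × B, 0 ≤ f₁ z.1 * f z / ∫ z₂, f (z.1, z₂) ∂μ₂)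
    ∧ (∫ z : A × B, f₁ z.1 * f z / (∫ z₂, f (z.1, z₂) ∂μ₂) ∂(μ₁.prod μ₂)) = 1
    -- whose first marginal is f₁ μ₁-a.e.
    ∧ (∀ᵐ z₁ ∂μ₁, (∫ z₂, f₁ z₁ * f (z₁, z₂) / (∫ y, f (z₁, y) ∂μ₂) ∂μ₂) = f₁ z₁)
    -- and the Pythagorean identity holds
    ∧ ∀ g : A × B → ℝ,
        Measurable g → (∀ z, 0 ≤ g z) → (∫ z, g z ∂(μ₁.prod μ₂)) = 1 →
        (∀ᵐ z₁ ∂μ₁, (∫ z₂, g (z₁, z₂) ∂μ₂) = f₁ z₁) →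
        (∀ᵐ z ∂(μ₁.prod μ₂), f z = 0 → g z = 0) →
        Integrable (fun z => g z * log (g z / f z)) (μ₁.prod μ₂) →
        Integrable (fun z : A × B =>
          g z * log (g z / (f₁ z.1 * f z / ∫ z₂, f (z.1, z₂) ∂μ₂))) (μ₁.prod μ₂) →
        Integrable (fun z₁ => f₁ z₁ * log (f₁ z₁ / ∫ z₂, f (z₁, z₂) ∂μ₂)) μ₁ →
        (∫ z, g z * log (g z / f z) ∂(μ₁.prod μ₂))
          = (∫ z : A × B, g z * log (g z / (f₁ z.1 * f z / ∫ z₂, f (z.1, z₂) ∂μ₂))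
              ∂(μ₁.prod μ₂))
            + ∫ z₁, f₁ z₁ * log (f₁ z₁ / ∫ z₂, f (z₁, z₂) ∂μ₂) ∂μ₁ := by
  have hfi : Integrable f (μ₁.prod μ₂) :=
    .of_integral_ne_zero (by rw [hf_one]; exact one_ne_zero)
  have hf₁i : Integrable f₁ μ₁ := .of_integral_ne_zero (by rw [hf₁_one]; exact one_ne_zero)
  have hm_meas : Measurable (fun z₁ => ∫ z₂, f (z₁, z₂) ∂μ₂) :=
    (hf_meas.stronglyMeasurable.integral_prod_right' (ν := μ₂)).measurable
  have hm_nonneg : ∀ z₁, 0 ≤ ∫ z₂, f (z₁, z₂) ∂μ₂ :=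
    fun z₁ => integral_nonneg fun z₂ => hf_nonneg (z₁, z₂)
  have hφ_meas : Measurable (fun z : A × B => f₁ z.1 * f z / ∫ z₂, f (z.1, z₂) ∂μ₂) :=
    ((hf₁_meas.comp measurable_fst).mul hf_meas).div (hm_meas.comp measurable_fst)
  have hφ_nonneg : ∀ z : A × B, 0 ≤ f₁ z.1 * f z / ∫ z₂, f (z.1, z₂) ∂μ₂ :=
    fun z => div_nonneg (mul_nonneg (hf₁_nonneg _) (hf_nonneg _)) (hm_nonneg _)
  have hφ_marg : ∀ᵐ z₁ ∂μ₁,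
      (∫ z₂, f₁ z₁ * f (z₁, z₂) / (∫ y, f (z₁, y) ∂μ₂) ∂μ₂) = f₁ z₁ := by
    filter_upwards [hmarg_pos] with z₁ hz
    rw [integral_div, integral_const_mul, mul_div_assoc, div_self hz.ne', mul_one]
  have hφ_int : Integrable (fun z : A × B => f₁ z.1 * f z / ∫ z₂, f (z.1, z₂) ∂μ₂)
      (μ₁.prod μ₂) := by
    rw [integrable_prod_iff hφ_meas.aestronglyMeasurable]
    refine ⟨?_, ?_⟩
    · filter_upwards [hfi.prod_right_ae] with z₁ hz using (hz.const_mul _).div_const _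
    · refine hf₁i.congr ?_
      filter_upwards [hφ_marg] with z₁ hz
      refine hz.symm.trans ?_
      exact integral_congr_ae (Filter.Eventually.of_forall fun z₂ =>
        (Real.norm_of_nonneg (hφ_nonneg (z₁, z₂))).symm)
  refine ⟨hφ_meas, hφ_nonneg, ?_, hφ_marg, ?_⟩
  · rw [integral_prod _ hφ_int, ← hf₁_one]
    exact integral_congr_ae hφ_marg
  intro g hg_meas hg_nonneg hg_one hg_marg hgf hKL hKLφ _
  have hgi : Integrable g (μ₁.prod μ₂) :=
    .of_integral_ne_zero (by rw [hg_one]; exact one_ne_zero)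
  have hm_pos : ∀ᵐ z ∂(μ₁.prod μ₂), 0 < ∫ z₂, f (z.1, z₂) ∂μ₂ :=
    Measure.quasiMeasurePreserving_fst.ae hmarg_pos
  have hkey : (fun z => g z * log (g z / f z)
        - g z * log (g z / (f₁ z.1 * f z / ∫ z₂, f (z.1, z₂) ∂μ₂)))
      =ᵐ[μ₁.prod μ₂] fun z => g z * log (f₁ z.1 / ∫ z₂, f (z.1, z₂) ∂μ₂) := by
    filter_upwards [hgf, hm_pos,
      ae_eq_zero_of_marginal_eq_zero hg_meas hg_nonneg hgi hf₁_meas hg_marg] with z h1 h2 h3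
    by_cases hg : g z = 0
    · simp [hg]
    have hf0 : f z ≠ 0 := fun h => hg (h1 h)
    have hf₁0 : f₁ z.1 ≠ 0 := fun h => hg (h3 h)
    have hm0 := h2.ne'
    rw [log_div hg hf0, log_div hg (div_ne_zero (mul_ne_zero hf₁0 hf0) hm0),
      log_div (mul_ne_zero hf₁0 hf0) hm0, log_mul hf₁0 hf0, log_div hf₁0 hm0]
    ring
  -- Fubini applies to the right-hand side of `hkey`, integrable as a difference of integrable terms.
  have hmarg_int : (∫ z : A × B, g z * log (f₁ z.1 / ∫ z₂, f (z.1, z₂) ∂μ₂) ∂(μ₁.prod μ₂))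
      = ∫ z₁, f₁ z₁ * log (f₁ z₁ / ∫ z₂, f (z₁, z₂) ∂μ₂) ∂μ₁ := by
    rw [integral_prod _ ((hKL.sub hKLφ).congr hkey)]
    refine integral_congr_ae ?_
    filter_upwards [hg_marg] with z₁ hz
    simp only [integral_mul_const, hz]
  rw [← hmarg_int, ← integral_congr_ae hkey, integral_sub hKL hKLφ]
  ring
end

section
/- Let f be a density on A × B with respect to μ = μ₁ ⊗ μ₂ with Π₁f > 0 μ₁-a.e., and let f₁ be a density with respect to μ₁. Define φ₁(f)(z₁,z₂) := f₁(z₁)·f(z₁,z₂)/Π₁f(z₁). Then φ₁(f) is the Kullback–Leibler projection of f onto the set of densities with first marginal f₁: for every density g with respect to μ with Π₁g = f₁ μ₁-a.e., g = 0 μ-a.e. on {f = 0}, and KL(g‖f) finite, one has KL(g‖f) ≥ KL(φ₁(f)‖f) = KL(f₁‖Π₁f), with equality if and only if g = φ₁(f) μ-a.e. -/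
/-!
Write `m = Π₁f`, `p = φ₁(f) = f₁ f / m` and `L = log (f₁ / m)`, a function of `z₁` alone.
Since `log (p / f) = L` wherever `p ≠ 0`, the Pythagorean identity
`KL(g‖f) = KL(f₁‖m) + KL(g‖p)` follows from the pointwise identity
`g log (g / f) - g L - g + p = p · klFun (g / p)` (`raking_pointwise`), because integrating a
function of `z₁` against `g` or `p` only involves their common marginal `f₁` (`integral_fiber_mul`).
The right-hand side is nonnegative and vanishes only where `g = p`, giving the inequality and
the equality case.

The point needing care is that `f₁ L` is integrable, i.e. that `KL(f₁‖m)` is finite. It is bounded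
below by `f₁ - m`, and above, by integrating the pointwise inequality over the fibers, by
`∫ g log (g / f) dμ₂`, which is integrable as `KL(g‖f)` is finite.
-/

open MeasureTheory Real InformationTheory

/-- Integrating `q(z₁, z₂) L(z₁)` over the product reduces to integrating `L` against the first
marginal of `q`; integrability is transferred from the marginal to the product. -/
lemma integral_fiber_mul {A B : Type*} [MeasurableSpace A] [MeasurableSpace B]
    (μ₁ : Measure A) (μ₂ : Measure B) [SigmaFinite μ₁] [SigmaFinite μ₂]
    {q : A × B → ℝ} {L : A → ℝ} (hq : Measurable q) (hq0 : ∀ z, 0 ≤ q z)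
    (hqi : Integrable q (μ₁.prod μ₂)) (hL : Measurable L)
    (h : Integrable (fun a => (∫ b, q (a, b) ∂μ₂) * L a) μ₁) :
    Integrable (fun z : A × B => q z * L z.1) (μ₁.prod μ₂) ∧
      ∫ z : A × B, q z * L z.1 ∂(μ₁.prod μ₂) = ∫ a, (∫ b, q (a, b) ∂μ₂) * L a ∂μ₁ := by
  have hi : Integrable (fun z : A × B => q z * L z.1) (μ₁.prod μ₂) := by
    have hmeas : Measurable (fun z : A × B => q z * L z.1) := hq.mul (hL.comp measurable_fst)
    rw [integrable_prod_iff hmeas.aestronglyMeasurable]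
    constructor
    · filter_upwards [hqi.prod_right_ae] with a ha
      exact ha.mul_const _
    · refine h.norm.congr (Filter.Eventually.of_forall fun a => ?_)
      simp only [norm_mul, integral_mul_const]
      rw [Real.norm_of_nonneg (integral_nonneg fun b => hq0 (a, b))]
      congr 1
      exact integral_congr_ae
        (Filter.Eventually.of_forall fun b => (Real.norm_of_nonneg (hq0 (a, b))).symm)
  refine ⟨hi, ?_⟩
  rw [integral_prod _ hi]
  simp only [integral_mul_const]

lemma integral_sub_sub_add {X : Type*} [MeasurableSpace X] {ν : Measure X} {u v w x : X → ℝ}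
    (hu : Integrable u ν) (hv : Integrable v ν) (hw : Integrable w ν) (hx : Integrable x ν) :
    ∫ t, (u t - v t - w t + x t) ∂ν
      = ∫ t, u t ∂ν - ∫ t, v t ∂ν - ∫ t, w t ∂ν + ∫ t, x t ∂ν := by
  have huv : Integrable (fun t => u t - v t) ν := hu.sub hv
  have huvw : Integrable (fun t => u t - v t - w t) ν := huv.sub hw
  rw [integral_add huvw hx, integral_sub huv hw, integral_sub hu hv]

/-- The defect in the inequality `g log (g / p) ≥ g - p`, for `p = a f / m`, is `p · klFun (g / p)`.
The degenerate cases, where `p = 0`, are covered by the absolute continuity hypotheses. -/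
lemma raking_pointwise {f g a m : ℝ} (hf : 0 ≤ f) (hg : 0 ≤ g) (ha : 0 ≤ a) (hm : 0 < m)
    (hfg : f = 0 → g = 0) (hag : a = 0 → g = 0) :
    g * log (g / f) - g * log (a / m) - g + a * f / m
      = (a * f / m) * klFun (g / (a * f / m)) := by
  rcases hf.eq_or_lt with h | hf
  · simp [← h, hfg h.symm]
  rcases ha.eq_or_lt with h | ha
  · simp [← h, hag h.symm]
  rcases hg.eq_or_lt with h | hg
  · simp [← h, klFun_zero]
  have hlog : log (g / (a * f / m)) = log (g / f) - log (a / m) := by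
    rw [← log_div (by positivity) (by positivity)]
    congr 1
    field_simp
  rw [klFun, hlog]
  field_simp
  ring

/-- The raking half-step `φ₁(f)(z₁,z₂) = f₁(z₁)·f(z₁,z₂)/Π₁f(z₁)` is the
Kullback–Leibler projection of `f` onto the set of densities with first marginal `f₁`:
for every density `g` with respect to `μ = μ₁ ⊗ μ₂` with `Π₁g = f₁` μ₁-a.e., `g = 0`
μ-a.e. on `{f = 0}`, and `KL(g‖f)` finite, one has
`KL(g‖f) ≥ KL(φ₁(f)‖f) = KL(f₁‖Π₁f)`, with equality iff `g = φ₁(f)` μ-a.e. -/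
theorem raking_half_step_is_KL_projection
    {A B : Type*} [MeasurableSpace A] [MeasurableSpace B]
    (μ₁ : Measure A) (μ₂ : Measure B) [SigmaFinite μ₁] [SigmaFinite μ₂]
    (f : A × B → ℝ) (f₁ : A → ℝ)
    (hf_meas : Measurable f) (hf_nonneg : ∀ z, 0 ≤ f z)
    (hf_one : ∫ z, f z ∂(μ₁.prod μ₂) = 1)
    (hmarg_pos : ∀ᵐ z₁ ∂μ₁, 0 < ∫ z₂, f (z₁, z₂) ∂μ₂)
    (hf₁_meas : Measurable f₁) (hf₁_nonneg : ∀ z₁, 0 ≤ f₁ z₁)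
    (hf₁_one : ∫ z₁, f₁ z₁ ∂μ₁ = 1) :
    ∀ g : A × B → ℝ,
      Measurable g → (∀ z, 0 ≤ g z) → (∫ z, g z ∂(μ₁.prod μ₂)) = 1 →
      (∀ᵐ z₁ ∂μ₁, (∫ z₂, g (z₁, z₂) ∂μ₂) = f₁ z₁) →
      (∀ᵐ z ∂(μ₁.prod μ₂), f z = 0 → g z = 0) →
      Integrable (fun z => g z * log (g z / f z)) (μ₁.prod μ₂) →
      -- KL(g‖f) ≥ KL(φ₁(f)‖f)
      ((∫ z, g z * log (g z / f z) ∂(μ₁.prod μ₂))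
          ≥ ∫ z : A × B, (f₁ z.1 * f z / ∫ z₂, f (z.1, z₂) ∂μ₂)
              * log ((f₁ z.1 * f z / ∫ z₂, f (z.1, z₂) ∂μ₂) / f z) ∂(μ₁.prod μ₂))
      -- KL(φ₁(f)‖f) = KL(f₁‖Π₁f)
      ∧ ((∫ z : A × B, (f₁ z.1 * f z / ∫ z₂, f (z.1, z₂) ∂μ₂)
              * log ((f₁ z.1 * f z / ∫ z₂, f (z.1, z₂) ∂μ₂) / f z) ∂(μ₁.prod μ₂))
          = ∫ z₁, f₁ z₁ * log (f₁ z₁ / ∫ z₂, f (z₁, z₂) ∂μ₂) ∂μ₁)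
      -- equality holds iff g = φ₁(f) μ-a.e.
      ∧ ((∫ z, g z * log (g z / f z) ∂(μ₁.prod μ₂))
            = (∫ z : A × B, (f₁ z.1 * f z / ∫ z₂, f (z.1, z₂) ∂μ₂)
                * log ((f₁ z.1 * f z / ∫ z₂, f (z.1, z₂) ∂μ₂) / f z) ∂(μ₁.prod μ₂))
          ↔ g =ᵐ[μ₁.prod μ₂]
              fun z : A × B => f₁ z.1 * f z / ∫ z₂, f (z.1, z₂) ∂μ₂) := by
  intro g hg_meas hg_nonneg hg_one hg_marg hg_ac hKL
  have hfi : Integrable f (μ₁.prod μ₂) := .of_integral_ne_zero (by simp [hf_one])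
  have hgi : Integrable g (μ₁.prod μ₂) := .of_integral_ne_zero (by simp [hg_one])
  have hf₁i : Integrable f₁ μ₁ := .of_integral_ne_zero (by simp [hf₁_one])
  have hmi : Integrable (fun a => ∫ b, f (a, b) ∂μ₂) μ₁ := hfi.integral_prod_left
  have hm_meas : Measurable (fun a => ∫ b, f (a, b) ∂μ₂) :=
    hf_meas.stronglyMeasurable.integral_prod_right'.measurable
  set m : A → ℝ := fun a => ∫ b, f (a, b) ∂μ₂ with hm
  have hmarg_pos' : ∀ᵐ a ∂μ₁, 0 < m a := hmarg_pos
  -- From here on the marginal of `f` is the function `m`.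
  change ((∫ z, g z * log (g z / f z) ∂(μ₁.prod μ₂))
          ≥ ∫ z : A × B, (f₁ z.1 * f z / m z.1)
              * log ((f₁ z.1 * f z / m z.1) / f z) ∂(μ₁.prod μ₂))
      ∧ ((∫ z : A × B, (f₁ z.1 * f z / m z.1)
              * log ((f₁ z.1 * f z / m z.1) / f z) ∂(μ₁.prod μ₂))
          = ∫ z₁, f₁ z₁ * log (f₁ z₁ / m z₁) ∂μ₁)
      ∧ ((∫ z, g z * log (g z / f z) ∂(μ₁.prod μ₂))
            = (∫ z : A × B, (f₁ z.1 * f z / m z.1)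
                * log ((f₁ z.1 * f z / m z.1) / f z) ∂(μ₁.prod μ₂))
          ↔ g =ᵐ[μ₁.prod μ₂] fun z : A × B => f₁ z.1 * f z / m z.1)
  set L : A → ℝ := fun a => log (f₁ a / m a) with hLdef
  have hL_meas : Measurable L := (hf₁_meas.div hm_meas).log
  -- `p` is integrable with total mass one.
  have hp_marg : (fun a => m a * (f₁ a / m a)) =ᵐ[μ₁] f₁ := by
    filter_upwards [hmarg_pos'] with a ha
    field_simp
  have hp_eq : (fun z : A × B => f z * (f₁ z.1 / m z.1)) = fun z => f₁ z.1 * f z / m z.1 := by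
    funext z
    ring
  obtain ⟨hpi, hp_one⟩ := integral_fiber_mul μ₁ μ₂ hf_meas hf_nonneg hfi
    (hf₁_meas.div hm_meas) (hf₁i.congr hp_marg.symm)
  have hp_one : ∫ z : A × B, f₁ z.1 * f z / m z.1 ∂(μ₁.prod μ₂) = 1 := by
    rw [← hp_eq, ← hf₁_one]
    exact hp_one.trans (integral_congr_ae hp_marg)
  have hpi : Integrable (fun z : A × B => f₁ z.1 * f z / m z.1) (μ₁.prod μ₂) := hp_eq ▸ hpi
  -- `g` vanishes over `{f₁ = 0}`, as its integral there is that of `f₁`.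
  have hg_f₁ : ∀ᵐ z ∂(μ₁.prod μ₂), f₁ z.1 = 0 → g z = 0 := by
    have hS : MeasurableSet {a | f₁ a = 0} := hf₁_meas (measurableSet_singleton 0)
    have hI : Measurable ({a | f₁ a = 0}.indicator (fun _ => (1 : ℝ))) :=
      measurable_const.indicator hS
    have h0 : (fun a => (∫ b, g (a, b) ∂μ₂) * {a | f₁ a = 0}.indicator (fun _ => (1 : ℝ)) a)
        =ᵐ[μ₁] fun _ => 0 := by
      filter_upwards [hg_marg] with a ha
      rw [ha]
      by_cases h : f₁ a = 0 <;> simp [h]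
    obtain ⟨hi, he⟩ := integral_fiber_mul μ₁ μ₂ hg_meas hg_nonneg hgi hI
      ((integrable_zero _ _ _).congr h0.symm)
    rw [integral_congr_ae h0, integral_zero, integral_eq_zero_iff_of_nonneg
      (fun z => mul_nonneg (hg_nonneg z)
        (Set.indicator_nonneg (fun _ _ => zero_le_one) _)) hi] at he
    filter_upwards [he] with z hz h
    simpa [h] using hz
  have hmarg_prod : ∀ᵐ z : A × B ∂(μ₁.prod μ₂), 0 < m z.1 :=
    Measure.quasiMeasurePreserving_fst.ae hmarg_pos'
  have hpt : ∀ᵐ z : A × B ∂(μ₁.prod μ₂),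
      0 ≤ f₁ z.1 * f z / m z.1 ∧
      g z * log (g z / f z) - g z * L z.1 - g z + f₁ z.1 * f z / m z.1
        = (f₁ z.1 * f z / m z.1) * klFun (g z / (f₁ z.1 * f z / m z.1)) := by
    filter_upwards [hmarg_prod, hg_ac, hg_f₁] with z h1 h2 h3
    exact ⟨div_nonneg (mul_nonneg (hf₁_nonneg _) (hf_nonneg _)) h1.le,
      raking_pointwise (hf_nonneg z) (hg_nonneg z) (hf₁_nonneg _) h1 h2 h3⟩
  have hD_nonneg : ∀ᵐ z : A × B ∂(μ₁.prod μ₂),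
      0 ≤ g z * log (g z / f z) - g z * L z.1 - g z + f₁ z.1 * f z / m z.1 := by
    filter_upwards [hpt] with z ⟨h0, h⟩
    rw [h]
    have hp := div_nonneg (hg_nonneg z) h0
    exact mul_nonneg h0 (klFun_nonneg hp)
  -- `KL(f₁‖m)` is finite.
  have hf₁L : Integrable (fun a => f₁ a * L a) μ₁ := by
    refine integrable_of_le_of_le (hf₁_meas.mul hL_meas).aestronglyMeasurable
      (g₁ := fun a => f₁ a - m a)
      (g₂ := fun a => ∫ b, g (a, b) * log (g (a, b) / f (a, b)) ∂μ₂)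
      ?_ ?_ (hf₁i.sub hmi) hKL.integral_prod_left
    · filter_upwards [hmarg_pos'] with a ha
      have h := mul_nonneg ha.le (klFun_nonneg (div_nonneg (hf₁_nonneg a) ha.le))
      have h' : m a * klFun (f₁ a / m a) = f₁ a * L a + m a - f₁ a := by
        rw [klFun]
        field_simp
        simp [L]
      linarith
    · filter_upwards [hmarg_pos', hg_marg, Measure.ae_ae_of_ae_prod hD_nonneg,
        hKL.prod_right_ae, hgi.prod_right_ae, hpi.prod_right_ae] with a ha hga hD hk hgb hpb
      have hp : ∫ b, f₁ a * f (a, b) / m a ∂μ₂ = f₁ a := by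
        rw [integral_div, integral_const_mul]
        change f₁ a * m a / m a = f₁ a
        field_simp
      have h := integral_nonneg_of_ae hD
      rw [integral_sub_sub_add hk (hgb.mul_const _) hgb hpb, integral_mul_const, hga, hp] at h
      linarith
  obtain ⟨hgLi, hgL⟩ := integral_fiber_mul μ₁ μ₂ hg_meas hg_nonneg hgi hL_meas
    (hf₁L.congr (by
      filter_upwards [hg_marg] with a ha
      rw [ha]))
  have hgL : ∫ z : A × B, g z * L z.1 ∂(μ₁.prod μ₂) = ∫ a, f₁ a * L a ∂μ₁ := by
    rw [hgL]
    refine integral_congr_ae ?_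
    filter_upwards [hg_marg] with a ha
    rw [ha]
  have hpL : ∫ z : A × B, (f₁ z.1 * f z / m z.1)
      * log ((f₁ z.1 * f z / m z.1) / f z) ∂(μ₁.prod μ₂) = ∫ a, f₁ a * L a ∂μ₁ := by
    have hmarg : (fun a => m a * (f₁ a / m a * L a)) =ᵐ[μ₁] fun a => f₁ a * L a := by
      filter_upwards [hmarg_pos'] with a ha
      field_simp
    rw [← integral_congr_ae hmarg]
    refine Eq.trans ?_ (integral_fiber_mul μ₁ μ₂ hf_meas hf_nonneg hfi
      ((hf₁_meas.div hm_meas).mul hL_meas) (hf₁L.congr hmarg.symm)).2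
    congr 1
    funext z
    by_cases h : f z = 0
    · simp [h]
    · have : f₁ z.1 * f z / m z.1 / f z = f₁ z.1 / m z.1 := by field_simp
      rw [this]
      simp only [L, Pi.mul_apply, Pi.div_apply]
      ring
  have hDi : Integrable (fun z : A × B =>
      g z * log (g z / f z) - g z * L z.1 - g z + f₁ z.1 * f z / m z.1) (μ₁.prod μ₂) :=
    ((hKL.sub hgLi).sub hgi).add hpi
  have hD : ∫ z : A × B,
      (g z * log (g z / f z) - g z * L z.1 - g z + f₁ z.1 * f z / m z.1) ∂(μ₁.prod μ₂)
      = ∫ z, g z * log (g z / f z) ∂(μ₁.prod μ₂) - ∫ a, f₁ a * L a ∂μ₁ := by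
    rw [integral_sub_sub_add hKL hgLi hgi hpi, hgL, hg_one, hp_one]
    ring
  refine ⟨?_, hpL, ?_⟩
  · rw [hpL]
    have := integral_nonneg_of_ae hD_nonneg
    rw [hD] at this
    linarith
  · rw [hpL, ← sub_eq_zero, ← hD, integral_eq_zero_iff_of_nonneg_ae hD_nonneg hDi]
    refine Filter.eventually_congr ?_
    filter_upwards [hpt, hmarg_prod, hg_ac, hg_f₁] with z ⟨h0, h⟩ h1 h2 h3
    simp only [Pi.zero_apply]
    rw [h, mul_eq_zero, klFun_eq_zero_iff (div_nonneg (hg_nonneg z) h0)]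
    constructor
    · rintro (hp | hp)
      · rw [hp]
        rcases div_eq_zero_iff.1 hp with h4 | h4
        · exact (mul_eq_zero.1 h4).elim h3 h2
        · exact absurd h4 h1.ne'
      · exact eq_of_div_eq_one hp
    · intro hp
      rw [hp]
      by_cases h5 : f₁ z.1 * f z / m z.1 = 0
      · exact .inl h5
      · exact .inr (div_self h5)
end

section
/- Let f^w be a density on A × B with respect to μ = μ₁ ⊗ μ₂, let k₁ : A → ℝ and k₂ : B → ℝ be bounded measurable functions, and suppose that g(z₁,z₂) := e^{k₁(z₁)+k₂(z₂)}·f^w(z₁,z₂) is a density with respect to μ whose marginals are Π₁g = f₁ μ₁-a.e. and Π₂g = f₂ μ₂-a.e. Then KL(g‖f^w) = ∫ k₁ f₁ dμ₁ + ∫ k₂ f₂ dμ₂, and for every density h with respect to μ satisfying Π₁h = f₁ μ₁-a.e., Π₂h = f₂ μ₂-a.e., h = 0 μ-a.e. on {f^w = 0}, and KL(h‖f^w) < ∞, one has KL(h‖f^w) ≥ KL(g‖f^w), with equality if and only if h = g μ-a.e. In other words, an additively separable exponential tilt of f^w with the prescribed marginals is the unique Kullback–Leibler projection of f^w onto the set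 of densities with marginals f₁ and f₂. -/
/-!
The tilt `g = e^{k₁ ⊕ k₂} · fw` satisfies `log (g / fw) = k₁ ⊕ k₂`. Integrating an additively
separable function against a density only involves the marginals of that density
(`integral_add_mul_eq_of_marginals`), so `∫ h · (k₁ ⊕ k₂) = ∫ k₁ f₁ + ∫ k₂ f₂ = KL(g‖fw)` for every
`h` with marginals `f₁` and `f₂`, and in particular for `g` itself. Hence
`KL(h‖fw) - KL(g‖fw) = ∫ (h log (h / fw) - h (k₁ ⊕ k₂) - h + g)`, the last two terms cancelling
because both densities have mass one. Where `fw > 0` the integrand is `g · klFun (h / g)`, and where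
`fw = 0` it is zero, so it is nonnegative and vanishes only where `h = g` (`tilt_gap_nonneg`,
`tilt_gap_eq_zero_iff`); this gives the Pythagorean identity `KL(h‖fw) = KL(g‖fw) + KL(h‖g)` together
with the Gibbs inequality and its equality case.
-/

open MeasureTheory Real

lemma integrable_bdd_mul_of_measurable {α : Type*} [MeasurableSpace α] {μ : Measure α}
    {k u : α → ℝ} (hk : Measurable k) (hb : ∃ C, ∀ x, |k x| ≤ C) (hu : Integrable u μ) :
    Integrable (fun x => k x * u x) μ := by
  obtain ⟨C, hC⟩ := hb
  exact hu.bdd_mul (c := C) hk.aestronglyMeasurable (ae_of_all _ hC)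

/-- Integrating `k₁ ⊕ k₂` against a function on the product only involves its marginals. -/
lemma integral_add_mul_eq_of_marginals {A B : Type*} [MeasurableSpace A] [MeasurableSpace B]
    {μ₁ : Measure A} {μ₂ : Measure B} [SigmaFinite μ₁] [SigmaFinite μ₂]
    {k₁ : A → ℝ} {k₂ : B → ℝ} {f₁ : A → ℝ} {f₂ : B → ℝ} {u : A × B → ℝ}
    (hk₁ : Measurable k₁) (hk₂ : Measurable k₂)
    (hb₁ : ∃ C, ∀ x, |k₁ x| ≤ C) (hb₂ : ∃ C, ∀ x, |k₂ x| ≤ C)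
    (hu : Integrable u (μ₁.prod μ₂))
    (h₁ : ∀ᵐ x ∂μ₁, (∫ y, u (x, y) ∂μ₂) = f₁ x)
    (h₂ : ∀ᵐ y ∂μ₂, (∫ x, u (x, y) ∂μ₁) = f₂ y) :
    Integrable (fun z : A × B => (k₁ z.1 + k₂ z.2) * u z) (μ₁.prod μ₂) ∧
      ∫ z, (k₁ z.1 + k₂ z.2) * u z ∂(μ₁.prod μ₂)
        = (∫ x, k₁ x * f₁ x ∂μ₁) + ∫ y, k₂ y * f₂ y ∂μ₂ := by
  have i₁ : Integrable (fun z : A × B => k₁ z.1 * u z) (μ₁.prod μ₂) :=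
    integrable_bdd_mul_of_measurable (hk₁.comp measurable_fst)
      (hb₁.imp fun C hC z => hC z.1) hu
  have i₂ : Integrable (fun z : A × B => k₂ z.2 * u z) (μ₁.prod μ₂) :=
    integrable_bdd_mul_of_measurable (hk₂.comp measurable_snd)
      (hb₂.imp fun C hC z => hC z.2) hu
  simp only [add_mul]
  refine ⟨i₁.add i₂, ?_⟩
  rw [integral_add i₁ i₂, integral_prod _ i₁, integral_prod_symm _ i₂]
  simp only [integral_const_mul]
  congr 1
  · exact integral_congr_ae (h₁.mono fun x hx => by simp only [hx])
  · exact integral_congr_ae (h₂.mono fun y hy => by simp only [hy])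

/-- The integrand of `KL(h‖fw) - KL(g‖fw)` at a point with `h = a`, `fw = w > 0` and `k₁ ⊕ k₂ = c`,
written as `g · klFun (h / g)` with `g = e^c · w`. -/
lemma tilt_gap_eq_klFun {a w c : ℝ} (ha : 0 ≤ a) (hw : 0 < w) :
    a * log (a / w) - c * a - a + exp c * w
      = exp c * w * InformationTheory.klFun (a / (exp c * w)) := by
  have hb : 0 < exp c * w := by positivity
  rcases ha.eq_or_lt with rfl | ha
  · simp [InformationTheory.klFun]
  · rw [InformationTheory.klFun, log_div ha.ne' hw.ne', log_div ha.ne' hb.ne',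
      log_mul (exp_pos c).ne' hw.ne', log_exp]
    field_simp
    ring

lemma tilt_gap_nonneg {a w c : ℝ} (ha : 0 ≤ a) (hw : 0 ≤ w) (h0 : w = 0 → a = 0) :
    0 ≤ a * log (a / w) - c * a - a + exp c * w := by
  rcases hw.eq_or_lt with rfl | hw
  · simp [h0 rfl]
  · rw [tilt_gap_eq_klFun ha hw]
    exact mul_nonneg (by positivity) (InformationTheory.klFun_nonneg (by positivity))

lemma tilt_gap_eq_zero_iff {a w c : ℝ} (ha : 0 ≤ a) (hw : 0 ≤ w) (h0 : w = 0 → a = 0) :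
    a * log (a / w) - c * a - a + exp c * w = 0 ↔ a = exp c * w := by
  rcases hw.eq_or_lt with rfl | hw
  · simp [h0 rfl]
  · have hb : 0 < exp c * w := by positivity
    rw [tilt_gap_eq_klFun ha hw, mul_eq_zero, or_iff_right hb.ne',
      InformationTheory.klFun_eq_zero_iff (by positivity), div_eq_one_iff_eq hb.ne']

/-- If `g(z₁,z₂) = e^{k₁(z₁)+k₂(z₂)}·f^w(z₁,z₂)` (with `k₁, k₂` bounded
measurable) is a density with marginals `f₁` and `f₂`, then
`KL(g‖f^w) = ∫ k₁ f₁ dμ₁ + ∫ k₂ f₂ dμ₂`, and `g` is the unique Kullback–Leibler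
projection of `f^w` onto the set of densities with marginals `f₁` and `f₂`. -/
theorem additively_separable_exp_tilt_is_KL_projection
    {A B : Type*} [MeasurableSpace A] [MeasurableSpace B]
    (μ₁ : Measure A) (μ₂ : Measure B) [SigmaFinite μ₁] [SigmaFinite μ₂]
    (fw : A × B → ℝ) (k₁ : A → ℝ) (k₂ : B → ℝ) (f₁ : A → ℝ) (f₂ : B → ℝ)
    (hfw_meas : Measurable fw) (hfw_nonneg : ∀ z, 0 ≤ fw z)
    (hfw_one : ∫ z, fw z ∂(μ₁.prod μ₂) = 1)
    (hk₁_meas : Measurable k₁) (hk₂_meas : Measurable k₂)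
    (hk₁_bdd : ∃ C, ∀ z₁, |k₁ z₁| ≤ C) (hk₂_bdd : ∃ C, ∀ z₂, |k₂ z₂| ≤ C)
    -- g := e^{k₁⊕k₂}·f^w is a density with respect to μ
    (hg_one : ∫ z : A × B, exp (k₁ z.1 + k₂ z.2) * fw z ∂(μ₁.prod μ₂) = 1)
    -- whose marginals are f₁ and f₂
    (hmarg₁ : ∀ᵐ z₁ ∂μ₁, (∫ z₂, exp (k₁ z₁ + k₂ z₂) * fw (z₁, z₂) ∂μ₂) = f₁ z₁)
    (hmarg₂ : ∀ᵐ z₂ ∂μ₂, (∫ z₁, exp (k₁ z₁ + k₂ z₂) * fw (z₁, z₂) ∂μ₁) = f₂ z₂) :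
    -- KL(g‖f^w) = ∫ k₁ f₁ dμ₁ + ∫ k₂ f₂ dμ₂
    ((∫ z : A × B, (exp (k₁ z.1 + k₂ z.2) * fw z)
        * log ((exp (k₁ z.1 + k₂ z.2) * fw z) / fw z) ∂(μ₁.prod μ₂))
      = (∫ z₁, k₁ z₁ * f₁ z₁ ∂μ₁) + ∫ z₂, k₂ z₂ * f₂ z₂ ∂μ₂)
    -- g is the unique KL projection on the set of densities with marginals f₁, f₂
    ∧ ∀ h : A × B → ℝ,
        Measurable h → (∀ z, 0 ≤ h z) → (∫ z, h z ∂(μ₁.prod μ₂)) = 1 →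
        (∀ᵐ z₁ ∂μ₁, (∫ z₂, h (z₁, z₂) ∂μ₂) = f₁ z₁) →
        (∀ᵐ z₂ ∂μ₂, (∫ z₁, h (z₁, z₂) ∂μ₁) = f₂ z₂) →
        (∀ᵐ z ∂(μ₁.prod μ₂), fw z = 0 → h z = 0) →
        Integrable (fun z => h z * log (h z / fw z)) (μ₁.prod μ₂) →
        ((∫ z, h z * log (h z / fw z) ∂(μ₁.prod μ₂))
            ≥ ∫ z : A × B, (exp (k₁ z.1 + k₂ z.2) * fw z)
                * log ((exp (k₁ z.1 + k₂ z.2) * fw z) / fw z) ∂(μ₁.prod μ₂))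
        ∧ ((∫ z, h z * log (h z / fw z) ∂(μ₁.prod μ₂))
              = (∫ z : A × B, (exp (k₁ z.1 + k₂ z.2) * fw z)
                  * log ((exp (k₁ z.1 + k₂ z.2) * fw z) / fw z) ∂(μ₁.prod μ₂))
            ↔ h =ᵐ[μ₁.prod μ₂] fun z : A × B => exp (k₁ z.1 + k₂ z.2) * fw z) := by
  have integrable_of_one : ∀ u : A × B → ℝ, ∫ z, u z ∂(μ₁.prod μ₂) = 1 →
      Integrable u (μ₁.prod μ₂) := fun u hu =>
    Integrable.of_integral_ne_zero (by rw [hu]; exact one_ne_zero)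
  have hg_int := integrable_of_one _ hg_one
  have hKLg : (∫ z : A × B, (exp (k₁ z.1 + k₂ z.2) * fw z)
        * log ((exp (k₁ z.1 + k₂ z.2) * fw z) / fw z) ∂(μ₁.prod μ₂))
      = (∫ z₁, k₁ z₁ * f₁ z₁ ∂μ₁) + ∫ z₂, k₂ z₂ * f₂ z₂ ∂μ₂ := by
    rw [← (integral_add_mul_eq_of_marginals hk₁_meas hk₂_meas hk₁_bdd hk₂_bdd hg_int
      hmarg₁ hmarg₂).2]
    congr 1 with z
    -- where `fw z = 0` both sides vanish, so the junk value of the quotient is harmless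
    by_cases hz : fw z = 0
    · simp [hz]
    · rw [mul_div_cancel_right₀ _ hz, log_exp, mul_comm]
  refine ⟨hKLg, fun h _ hh_nonneg hh_one hh₁ hh₂ hh0 hh_int => ?_⟩
  obtain ⟨hk_int, hk_eq⟩ := integral_add_mul_eq_of_marginals hk₁_meas hk₂_meas hk₁_bdd hk₂_bdd
    (integrable_of_one h hh_one) hh₁ hh₂
  have i₁ : Integrable (fun z : A × B => h z * log (h z / fw z) - (k₁ z.1 + k₂ z.2) * h z)
      (μ₁.prod μ₂) := hh_int.sub hk_int
  have i₂ : Integrable (fun z : A × B => h z * log (h z / fw z) - (k₁ z.1 + k₂ z.2) * h z - h z)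
      (μ₁.prod μ₂) := i₁.sub (integrable_of_one h hh_one)
  have i₃ := i₂.add hg_int
  have hgap : ∫ z : A × B, (h z * log (h z / fw z) - (k₁ z.1 + k₂ z.2) * h z - h z
        + exp (k₁ z.1 + k₂ z.2) * fw z) ∂(μ₁.prod μ₂)
      = (∫ z, h z * log (h z / fw z) ∂(μ₁.prod μ₂))
        - ((∫ z₁, k₁ z₁ * f₁ z₁ ∂μ₁) + ∫ z₂, k₂ z₂ * f₂ z₂ ∂μ₂) := by
    rw [integral_add i₂ hg_int, integral_sub i₁ (integrable_of_one h hh_one),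
      integral_sub hh_int hk_int, hk_eq, hh_one, hg_one]
    ring
  have hgap_nonneg : 0 ≤ᵐ[μ₁.prod μ₂] fun z : A × B => h z * log (h z / fw z)
      - (k₁ z.1 + k₂ z.2) * h z - h z + exp (k₁ z.1 + k₂ z.2) * fw z :=
    hh0.mono fun z hz => tilt_gap_nonneg (hh_nonneg z) (hfw_nonneg z) hz
  rw [hKLg]
  refine ⟨?_, ?_⟩
  · have := integral_nonneg_of_ae hgap_nonneg
    rw [hgap] at this
    linarith
  · rw [← sub_eq_zero, ← hgap, integral_eq_zero_iff_of_nonneg_ae hgap_nonneg i₃]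
    refine Filter.eventually_congr (hh0.mono fun z hz => ?_)
    exact tilt_gap_eq_zero_iff (hh_nonneg z) (hfw_nonneg z) hz
end

section
/- Let f^w be a density on A × B with respect to μ = μ₁ ⊗ μ₂, and let f₁, f₂ be densities with respect to μ₁, μ₂ respectively such that k₁ f₁ is μ₁-integrable and k₂ f₂ is μ₂-integrable for all bounded measurable k₁, k₂. Suppose k⁰₁ : A → ℝ and k⁰₂ : B → ℝ are bounded measurable functions such that the density e^{k⁰₁(z₁)+k⁰₂(z₂)}·f^w(z₁,z₂) has first marginal f₁ μ₁-a.e. and second marginal f₂ μ₂-a.e. Then (k⁰₁, k⁰₂) minimizes the dual criterion M over all pairs of bounded measurable functions: M(k₁,k₂) ≥ M(k⁰₁,k⁰₂) for every bounded measurable k₁ : A → ℝ and k₂ : B → ℝ. -/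
/-!
Write `g = e^{k⁰₁ ⊕ k⁰₂} f^w`. Since `g` has marginals `f₁` and `f₂`, Fubini gives
`∫ k₁ f₁ dμ₁ = ∬ k₁(z₁) g dμ` and `∫ k₂ f₂ dμ₂ = ∬ k₂(z₂) g dμ` for bounded `k₁`, `k₂`
(`integral_mul_marginal_fst`, `integral_mul_marginal_snd`). The tangent-line inequality
`e^t ≥ 1 + t` at `t = (k₁ - k⁰₁) + (k₂ - k⁰₂)`, multiplied by `g ≥ 0`, reads
`e^{k₁ ⊕ k₂} f^w ≥ g + (k₁ - k⁰₁) g + (k₂ - k⁰₂) g`; integrating it is the claim.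
-/

open MeasureTheory Real

/-- The dual criterion
`M(k₁,k₂) = ∬ e^{k₁(z₁)+k₂(z₂)} f^w dμ − ∫ k₁ f₁ dμ₁ − ∫ k₂ f₂ dμ₂`. -/
noncomputable def dualCriterion {A B : Type*} [MeasurableSpace A] [MeasurableSpace B]
    (μ₁ : Measure A) (μ₂ : Measure B) (fw : A × B → ℝ) (f₁ : A → ℝ) (f₂ : B → ℝ)
    (k₁ : A → ℝ) (k₂ : B → ℝ) : ℝ :=
  (∫ z : A × B, Real.exp (k₁ z.1 + k₂ z.2) * fw z ∂(μ₁.prod μ₂))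
    - (∫ z₁, k₁ z₁ * f₁ z₁ ∂μ₁) - ∫ z₂, k₂ z₂ * f₂ z₂ ∂μ₂

lemma integrable_exp_add_mul {A B : Type*} [MeasurableSpace A] [MeasurableSpace B]
    {μ : Measure (A × B)} {f : A × B → ℝ} (hf : Integrable f μ)
    {k₁ : A → ℝ} {k₂ : B → ℝ} (h₁ : Measurable k₁) (h₂ : Measurable k₂)
    (b₁ : ∃ C, ∀ x, |k₁ x| ≤ C) (b₂ : ∃ C, ∀ y, |k₂ y| ≤ C) :
    Integrable (fun z : A × B => exp (k₁ z.1 + k₂ z.2) * f z) μ := by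
  obtain ⟨C₁, b₁⟩ := b₁
  obtain ⟨C₂, b₂⟩ := b₂
  refine hf.bdd_mul (c := exp (C₁ + C₂)) (by fun_prop) (ae_of_all _ fun z => ?_)
  rw [norm_eq_abs, abs_exp, exp_le_exp]
  exact add_le_add ((le_abs_self _).trans (b₁ _)) ((le_abs_self _).trans (b₂ _))

lemma integrable_bounded_mul {Ω : Type*} [MeasurableSpace Ω] {μ : Measure Ω} {g k : Ω → ℝ}
    (hg : Integrable g μ) (hk : Measurable k) (b : ∃ C, ∀ x, |k x| ≤ C) :
    Integrable (fun z => k z * g z) μ := by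
  obtain ⟨C, b⟩ := b
  exact hg.bdd_mul (c := C) (by fun_prop) (ae_of_all _ fun z => b z)

lemma integral_mul_marginal_fst {A B : Type*} [MeasurableSpace A] [MeasurableSpace B]
    {μ₁ : Measure A} {μ₂ : Measure B} [SigmaFinite μ₁] [SigmaFinite μ₂]
    {g : A × B → ℝ} {f : A → ℝ} {k : A → ℝ}
    (hkg : Integrable (fun z : A × B => k z.1 * g z) (μ₁.prod μ₂))
    (hm : ∀ᵐ x ∂μ₁, (∫ y, g (x, y) ∂μ₂) = f x) :
    ∫ x, k x * f x ∂μ₁ = ∫ z, k z.1 * g z ∂(μ₁.prod μ₂) := by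
  rw [integral_prod _ hkg]
  refine integral_congr_ae ?_
  filter_upwards [hm] with x hx
  rw [integral_const_mul, hx]

lemma integral_mul_marginal_snd {A B : Type*} [MeasurableSpace A] [MeasurableSpace B]
    {μ₁ : Measure A} {μ₂ : Measure B} [SigmaFinite μ₁] [SigmaFinite μ₂]
    {g : A × B → ℝ} {f : B → ℝ} {k : B → ℝ}
    (hkg : Integrable (fun z : A × B => k z.2 * g z) (μ₁.prod μ₂))
    (hm : ∀ᵐ y ∂μ₂, (∫ x, g (x, y) ∂μ₁) = f y) :
    ∫ y, k y * f y ∂μ₂ = ∫ z, k z.2 * g z ∂(μ₁.prod μ₂) := by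
  rw [integral_prod_symm _ hkg]
  refine integral_congr_ae ?_
  filter_upwards [hm] with y hy
  rw [integral_const_mul, hy]

/-- If `(k⁰₁, k⁰₂)` are bounded measurable functions such that the density
`e^{k⁰₁(z₁)+k⁰₂(z₂)}·f^w(z₁,z₂)` has marginals `f₁` and `f₂` a.e., then `(k⁰₁, k⁰₂)`
minimizes the dual criterion `M` over all pairs of bounded measurable functions. -/
theorem exp_tilt_with_correct_marginals_minimizes_dual_criterion
    {A B : Type*} [MeasurableSpace A] [MeasurableSpace B]
    (μ₁ : Measure A) (μ₂ : Measure B) [SigmaFinite μ₁] [SigmaFinite μ₂]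
    (fw : A × B → ℝ) (f₁ : A → ℝ) (f₂ : B → ℝ)
    (hfw_meas : Measurable fw) (hfw_nonneg : ∀ z, 0 ≤ fw z)
    (hfw_one : ∫ z, fw z ∂(μ₁.prod μ₂) = 1)
    (hf₁_meas : Measurable f₁) (hf₁_nonneg : ∀ z₁, 0 ≤ f₁ z₁)
    (hf₁_one : ∫ z₁, f₁ z₁ ∂μ₁ = 1)
    (hf₂_meas : Measurable f₂) (hf₂_nonneg : ∀ z₂, 0 ≤ f₂ z₂)
    (hf₂_one : ∫ z₂, f₂ z₂ ∂μ₂ = 1)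
    -- k₁ f₁ and k₂ f₂ are integrable for all bounded measurable k₁, k₂
    (hint₁ : ∀ k₁ : A → ℝ, Measurable k₁ → (∃ C, ∀ z₁, |k₁ z₁| ≤ C) →
      Integrable (fun z₁ => k₁ z₁ * f₁ z₁) μ₁)
    (hint₂ : ∀ k₂ : B → ℝ, Measurable k₂ → (∃ C, ∀ z₂, |k₂ z₂| ≤ C) →
      Integrable (fun z₂ => k₂ z₂ * f₂ z₂) μ₂)
    (k01 : A → ℝ) (k02 : B → ℝ)
    (hk01_meas : Measurable k01) (hk02_meas : Measurable k02)
    (hk01_bdd : ∃ C, ∀ z₁, |k01 z₁| ≤ C) (hk02_bdd : ∃ C, ∀ z₂, |k02 z₂| ≤ C)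
    -- the density e^{k⁰₁⊕k⁰₂}·f^w has first marginal f₁ and second marginal f₂
    (hmarg₁ : ∀ᵐ z₁ ∂μ₁, (∫ z₂, exp (k01 z₁ + k02 z₂) * fw (z₁, z₂) ∂μ₂) = f₁ z₁)
    (hmarg₂ : ∀ᵐ z₂ ∂μ₂, (∫ z₁, exp (k01 z₁ + k02 z₂) * fw (z₁, z₂) ∂μ₁) = f₂ z₂) :
    ∀ (k₁ : A → ℝ) (k₂ : B → ℝ),
      Measurable k₁ → (∃ C, ∀ z₁, |k₁ z₁| ≤ C) →
      Measurable k₂ → (∃ C, ∀ z₂, |k₂ z₂| ≤ C) →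
      dualCriterion μ₁ μ₂ fw f₁ f₂ k₁ k₂ ≥ dualCriterion μ₁ μ₂ fw f₁ f₂ k01 k02 := by
  intro k₁ k₂ hk₁ b₁ hk₂ b₂
  -- A non-integrable function would have Bochner integral `0`, not `1`.
  have hfw : Integrable fw (μ₁.prod μ₂) := by
    by_contra h
    rw [integral_undef h] at hfw_one
    exact zero_ne_one hfw_one
  have hE := integrable_exp_add_mul hfw hk₁ hk₂ b₁ b₂
  have hg := integrable_exp_add_mul hfw hk01_meas hk02_meas hk01_bdd hk02_bdd
  have fst_int : ∀ k : A → ℝ, Measurable k → (∃ C, ∀ x, |k x| ≤ C) →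
      Integrable (fun z : A × B => k z.1 * (exp (k01 z.1 + k02 z.2) * fw z)) (μ₁.prod μ₂) :=
    fun k hk ⟨C, hC⟩ =>
      integrable_bounded_mul hg (hk.comp measurable_fst) ⟨C, fun z => hC z.1⟩
  have snd_int : ∀ k : B → ℝ, Measurable k → (∃ C, ∀ y, |k y| ≤ C) →
      Integrable (fun z : A × B => k z.2 * (exp (k01 z.1 + k02 z.2) * fw z)) (μ₁.prod μ₂) :=
    fun k hk ⟨C, hC⟩ =>
      integrable_bounded_mul hg (hk.comp measurable_snd) ⟨C, fun z => hC z.2⟩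
  have i₁ := fst_int k₁ hk₁ b₁
  have i01 := fst_int k01 hk01_meas hk01_bdd
  have i₂ := snd_int k₂ hk₂ b₂
  have i02 := snd_int k02 hk02_meas hk02_bdd
  unfold dualCriterion
  rw [integral_mul_marginal_fst i₁ hmarg₁, integral_mul_marginal_fst i01 hmarg₁,
    integral_mul_marginal_snd i₂ hmarg₂, integral_mul_marginal_snd i02 hmarg₂, ge_iff_le,
    ← integral_sub hg i01, ← integral_sub (hg.sub' i01) i02,
    ← integral_sub hE i₁, ← integral_sub (hE.sub' i₁) i₂]
  refine integral_mono ((hg.sub' i01).sub' i02) ((hE.sub' i₁).sub' i₂) fun z => ?_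
  have hsplit : exp (k₁ z.1 + k₂ z.2) * fw z
      = exp (k₁ z.1 + k₂ z.2 - (k01 z.1 + k02 z.2)) * (exp (k01 z.1 + k02 z.2) * fw z) := by
    rw [← mul_assoc, ← exp_add, sub_add_cancel]
  have htangent := mul_le_mul_of_nonneg_right
    (add_one_le_exp (k₁ z.1 + k₂ z.2 - (k01 z.1 + k02 z.2)))
    (mul_nonneg (exp_pos (k01 z.1 + k02 z.2)).le (hfw_nonneg z))
  rw [← hsplit] at htangent
  dsimp only
  linarith
end

section
/- Let f^w be a density on A × B with respect to μ = μ₁ ⊗ μ₂, and let f₁, f₂ be densities with respect to μ₁, μ₂ such that k₁ f₁ is μ₁-integrable and k₂ f₂ is μ₂-integrable for all bounded measurable k₁, k₂. If bounded measurable functions k⁰₁ : A → ℝ and k⁰₂ : B → ℝ minimize the dual criterion M over all pairs of bounded measurable functions, then the first-order conditions hold: Π₁(e^{k⁰₁⊕k⁰₂} f^w) = f₁ μ₁-a.e. and Π₂(e^{k⁰₁⊕k⁰₂} f^w) = f₂ μ₂-a.e., where (k⁰₁⊕k⁰₂)(z₁,z₂) = k⁰₁(z₁)+k⁰₂(z₂).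 -/
/-!
Perturb one potential of the minimizer by `t • 1_S`, with `S` measurable and `t` real. Since
`e^{t 1_S} = 1 + (e^t - 1) 1_S`, the criterion changes by `(e^t - 1) a - t b`, where `a` is the
integral of `g = e^{k⁰₁⊕k⁰₂} f^w` over the cylinder above `S` and `b` is the integral of the
prescribed marginal over `S`. This is nonnegative for every `t` and vanishes at `t = 0`, so its
derivative there, `a - b`, is zero (`eq_of_exp_sub_one_mul_nonneg`,
`setIntegral_preimage_eq_of_forall_le`). By Fubini the marginal of `g` and the prescribed marginal
have equal integrals over all measurable sets, hence agree almost everywhere.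
-/

open MeasureTheory Real

/-- The function `t ↦ (e^t - 1) a - t b` attains its minimum at `t = 0`, where its slope is `a - b`. -/
lemma eq_of_exp_sub_one_mul_nonneg {a b : ℝ} (h : ∀ t : ℝ, 0 ≤ (exp t - 1) * a - t * b) :
    a = b := by
  have hd : HasDerivAt (fun t : ℝ => (exp t - 1) * a - t * b) (exp 0 * a - 1 * b) 0 :=
    (((Real.hasDerivAt_exp 0).sub_const 1).mul_const a).sub ((hasDerivAt_id 0).mul_const b)
  have hm : IsLocalMin (fun t : ℝ => (exp t - 1) * a - t * b) 0 :=
    Filter.Eventually.of_forall fun t => by simpa using h t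
  have := hm.hasDerivAt_eq_zero hd
  rw [Real.exp_zero] at this
  linarith

/-- First-order condition tested against `1_S`. The map `φ` stands for one of the two coordinate
projections of the product space. -/
lemma setIntegral_preimage_eq_of_forall_le {X Y : Type*} [MeasurableSpace X] [MeasurableSpace Y]
    {ν : Measure X} {η : Measure Y} {g : X → ℝ} {f : Y → ℝ} {φ : X → Y} (hφ : Measurable φ)
    (hg : Integrable g ν) {S : Set Y} (hS : MeasurableSet S)
    (h : ∀ t : ℝ, ∫ x, g x ∂ν ≤
      ∫ x, exp (S.indicator (fun _ => t) (φ x)) * g x ∂ν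
        - ∫ y, S.indicator (fun _ => t) y * f y ∂η) :
    ∫ x in φ ⁻¹' S, g x ∂ν = ∫ y in S, f y ∂η := by
  apply eq_of_exp_sub_one_mul_nonneg
  intro t
  have h1 : (fun x => exp (S.indicator (fun _ => t) (φ x)) * g x)
      = fun x => g x + (exp t - 1) * (φ ⁻¹' S).indicator g x := by
    funext x
    by_cases hx : φ x ∈ S
    · rw [Set.indicator_of_mem hx, Set.indicator_of_mem (show x ∈ φ ⁻¹' S from hx)]
      ring
    · rw [Set.indicator_of_notMem hx, Set.indicator_of_notMem (show x ∉ φ ⁻¹' S from hx)]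
      simp
  have h2 : (fun y => S.indicator (fun _ => t) y * f y) = fun y => t * S.indicator f y := by
    funext y
    by_cases hy : y ∈ S <;> simp [hy]
  have ht := h t
  rw [h1, h2, integral_add hg ((hg.indicator (hφ hS)).const_mul _), integral_const_mul,
    integral_const_mul, integral_indicator (hφ hS), integral_indicator hS] at ht
  linarith

lemma exists_bound_add_indicator {Y : Type*} {k : Y → ℝ} (hk : ∃ C, ∀ y, |k y| ≤ C) (S : Set Y)
    (t : ℝ) : ∃ C, ∀ y, |k y + S.indicator (fun _ => t) y| ≤ C := by
  obtain ⟨C, hC⟩ := hk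
  refine ⟨C + |t|, fun y => (abs_add_le _ _).trans (add_le_add (hC y) ?_)⟩
  by_cases hy : y ∈ S <;> simp [hy]

lemma exists_bound_indicator {Y : Type*} (S : Set Y) (t : ℝ) :
    ∃ C, ∀ y, |S.indicator (fun _ => t) y| ≤ C := by
  simpa using exists_bound_add_indicator (k := fun _ : Y => (0 : ℝ)) ⟨0, by simp⟩ S t

/-- If bounded measurable `(k⁰₁, k⁰₂)` minimize the dual criterion `M`
over all pairs of bounded measurable functions, then the first-order conditions hold:
`Π₁(e^{k⁰₁⊕k⁰₂} f^w) = f₁` μ₁-a.e. and `Π₂(e^{k⁰₁⊕k⁰₂} f^w) = f₂` μ₂-a.e. -/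
theorem minimizer_of_dual_criterion_satisfies_first_order_conditions
    {A B : Type*} [MeasurableSpace A] [MeasurableSpace B]
    (μ₁ : Measure A) (μ₂ : Measure B) [SigmaFinite μ₁] [SigmaFinite μ₂]
    (fw : A × B → ℝ) (f₁ : A → ℝ) (f₂ : B → ℝ)
    (hfw_meas : Measurable fw) (hfw_nonneg : ∀ z, 0 ≤ fw z)
    (hfw_one : ∫ z, fw z ∂(μ₁.prod μ₂) = 1)
    (hf₁_meas : Measurable f₁) (hf₁_nonneg : ∀ z₁, 0 ≤ f₁ z₁)
    (hf₁_one : ∫ z₁, f₁ z₁ ∂μ₁ = 1)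
    (hf₂_meas : Measurable f₂) (hf₂_nonneg : ∀ z₂, 0 ≤ f₂ z₂)
    (hf₂_one : ∫ z₂, f₂ z₂ ∂μ₂ = 1)
    -- k₁ f₁ and k₂ f₂ are integrable for all bounded measurable k₁, k₂
    (hint₁ : ∀ k₁ : A → ℝ, Measurable k₁ → (∃ C, ∀ z₁, |k₁ z₁| ≤ C) →
      Integrable (fun z₁ => k₁ z₁ * f₁ z₁) μ₁)
    (hint₂ : ∀ k₂ : B → ℝ, Measurable k₂ → (∃ C, ∀ z₂, |k₂ z₂| ≤ C) →
      Integrable (fun z₂ => k₂ z₂ * f₂ z₂) μ₂)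
    (k01 : A → ℝ) (k02 : B → ℝ)
    (hk01_meas : Measurable k01) (hk02_meas : Measurable k02)
    (hk01_bdd : ∃ C, ∀ z₁, |k01 z₁| ≤ C) (hk02_bdd : ∃ C, ∀ z₂, |k02 z₂| ≤ C)
    -- (k⁰₁, k⁰₂) minimizes the dual criterion over bounded measurable pairs
    (hmin : ∀ (k₁ : A → ℝ) (k₂ : B → ℝ),
      Measurable k₁ → (∃ C, ∀ z₁, |k₁ z₁| ≤ C) →
      Measurable k₂ → (∃ C, ∀ z₂, |k₂ z₂| ≤ C) →
      dualCriterion μ₁ μ₂ fw f₁ f₂ k01 k02 ≤ dualCriterion μ₁ μ₂ fw f₁ f₂ k₁ k₂) :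
    (∀ᵐ z₁ ∂μ₁, (∫ z₂, exp (k01 z₁ + k02 z₂) * fw (z₁, z₂) ∂μ₂) = f₁ z₁)
    ∧ (∀ᵐ z₂ ∂μ₂, (∫ z₁, exp (k01 z₁ + k02 z₂) * fw (z₁, z₂) ∂μ₁) = f₂ z₂) := by
  set g : A × B → ℝ := fun z => exp (k01 z.1 + k02 z.2) * fw z with hg_def
  have hfw_int : Integrable fw (μ₁.prod μ₂) := by
    -- a non-integrable function would have Bochner integral `0`, not `1`
    by_contra hn
    rw [integral_undef hn] at hfw_one
    exact zero_ne_one hfw_one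
  have hg : Integrable g (μ₁.prod μ₂) := by
    obtain ⟨C₁, hC₁⟩ := hk01_bdd
    obtain ⟨C₂, hC₂⟩ := hk02_bdd
    refine hfw_int.bdd_mul (c := exp (C₁ + C₂)) (by fun_prop) (.of_forall fun z => ?_)
    rw [Real.norm_eq_abs, Real.abs_exp]
    exact Real.exp_le_exp.2 (add_le_add ((le_abs_self _).trans (hC₁ _))
      ((le_abs_self _).trans (hC₂ _)))
  have hf₁_int : Integrable f₁ μ₁ := by simpa using hint₁ (fun _ => 1) (by fun_prop) ⟨1, by simp⟩
  have hf₂_int : Integrable f₂ μ₂ := by simpa using hint₂ (fun _ => 1) (by fun_prop) ⟨1, by simp⟩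
  constructor
  · refine hg.integral_prod_left.ae_eq_of_forall_setIntegral_eq _ _ hf₁_int fun S hS _ => ?_
    rw [← setIntegral_preimage_eq_of_forall_le (η := μ₁) (f := f₁) measurable_fst hg hS ?_,
      ← Set.prod_univ, setIntegral_prod _ hg.integrableOn]
    · simp
    intro t
    have hu : Measurable (S.indicator fun _ => t) := measurable_const.indicator hS
    have hM := hmin (fun z => k01 z + S.indicator (fun _ => t) z) k02 (hk01_meas.add hu)
      (exists_bound_add_indicator hk01_bdd S t) hk02_meas hk02_bdd
    have he : (fun z : A × B => exp (k01 z.1 + S.indicator (fun _ => t) z.1 + k02 z.2) * fw z)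
        = fun z => exp (S.indicator (fun _ => t) z.1) * g z := by
      funext z
      rw [hg_def, ← mul_assoc, ← Real.exp_add]
      ring_nf
    simp only [dualCriterion, add_mul] at hM
    rw [he, integral_add (hint₁ _ hk01_meas hk01_bdd)
      (hint₁ _ hu (exists_bound_indicator S t))] at hM
    linarith
  · refine hg.integral_prod_right.ae_eq_of_forall_setIntegral_eq _ _ hf₂_int fun S hS _ => ?_
    rw [← setIntegral_preimage_eq_of_forall_le (η := μ₂) (f := f₂) measurable_snd hg hS ?_,
      ← Set.univ_prod, ← setIntegral_prod_swap,
      setIntegral_prod (fun z => g z.swap) hg.swap.integrableOn]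
    · simp
    intro t
    have hu : Measurable (S.indicator fun _ => t) := measurable_const.indicator hS
    have hM := hmin k01 (fun z => k02 z + S.indicator (fun _ => t) z) hk01_meas hk01_bdd
      (hk02_meas.add hu) (exists_bound_add_indicator hk02_bdd S t)
    have he : (fun z : A × B => exp (k01 z.1 + (k02 z.2 + S.indicator (fun _ => t) z.2)) * fw z)
        = fun z => exp (S.indicator (fun _ => t) z.2) * g z := by
      funext z
      rw [hg_def, ← mul_assoc, ← Real.exp_add]
      ring_nf
    simp only [dualCriterion, add_mul] at hM
    rw [he, integral_add (hint₂ _ hk02_meas hk02_bdd)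
      (hint₂ _ hu (exists_bound_indicator S t))] at hM
    linarith
end

section
/- Let f^w be a density on A × B with respect to μ = μ₁ ⊗ μ₂, let a : A → ℝ and b : B → ℝ be bounded measurable functions, and set f(z₁,z₂) := e^{a(z₁)+b(z₂)}·f^w(z₁,z₂). Assume Π₁f(z₁) > 0 for μ₁-a.e. z₁ and let f₁ be a density with respect to μ₁ with f₁ > 0 μ₁-a.e. Then the raking half-step preserves the additively separable exponential-tilt form: φ₁(f)(z₁,z₂) := f₁(z₁)·f(z₁,z₂)/Π₁f(z₁) satisfies, for μ-a.e. (z₁,z₂), φ₁(f)(z₁,z₂) = e^{a'(z₁)+b(z₂)}·f^w(z₁,z₂) with a'(z₁) = log f₁(z₁) − log ∫ e^{b(z₂)} f^w(z₁,z₂) dμ₂(z₂); moreover Π₁φ₁(f) = f₁ μ₁-a.e. -/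
/-!
The factor `exp (a z₁)` does not depend on `z₂`, so it comes out of the first marginal:
`Π₁f(z₁) = exp (a z₁) * ∫ exp (b z₂) * fw (z₁, z₂) dμ₂`. It therefore cancels in `f / Π₁f`, and
where `f₁` and `Π₁f` are positive the remaining `f₁ / ∫ exp b * fw` is the exponential of a
difference of logarithms. The `μ₁`-a.e. positivity lifts to the product because the first
projection is quasi-measure-preserving. The marginal identity holds since `f₁ z₁ / Π₁f(z₁)` is
constant in `z₂`.
-/

open MeasureTheory Real

/-- The raking half-step preserves the additively separable
exponential-tilt form: if `f = e^{a⊕b}·f^w` with `Π₁f > 0` μ₁-a.e. and `f₁ > 0` μ₁-a.e.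
is a density, then `φ₁(f)(z₁,z₂) := f₁(z₁)·f(z₁,z₂)/Π₁f(z₁)` satisfies, for μ-a.e.
`(z₁,z₂)`, `φ₁(f) = e^{a'⊕b}·f^w` with
`a'(z₁) = log f₁(z₁) − log ∫ e^{b(z₂)} f^w(z₁,z₂) dμ₂(z₂)`, and `Π₁φ₁(f) = f₁` μ₁-a.e. -/
theorem raking_half_step_preserves_exp_tilt_form
    {A B : Type*} [MeasurableSpace A] [MeasurableSpace B]
    (μ₁ : Measure A) (μ₂ : Measure B) [SigmaFinite μ₁] [SigmaFinite μ₂]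
    (fw : A × B → ℝ) (a : A → ℝ) (b : B → ℝ) (f₁ : A → ℝ)
    (hfw_meas : Measurable fw) (hfw_nonneg : ∀ z, 0 ≤ fw z)
    (hfw_one : ∫ z, fw z ∂(μ₁.prod μ₂) = 1)
    (ha_meas : Measurable a) (hb_meas : Measurable b)
    (ha_bdd : ∃ C, ∀ z₁, |a z₁| ≤ C) (hb_bdd : ∃ C, ∀ z₂, |b z₂| ≤ C)
    -- f := e^{a⊕b}·f^w is a density with respect to μ
    (hf_one : ∫ z : A × B, exp (a z.1 + b z.2) * fw z ∂(μ₁.prod μ₂) = 1)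
    -- Π₁f > 0 for μ₁-a.e. z₁
    (hmarg_pos : ∀ᵐ z₁ ∂μ₁, 0 < ∫ z₂, exp (a z₁ + b z₂) * fw (z₁, z₂) ∂μ₂)
    -- f₁ is a density with respect to μ₁ with f₁ > 0 μ₁-a.e.
    (hf₁_meas : Measurable f₁) (hf₁_nonneg : ∀ z₁, 0 ≤ f₁ z₁)
    (hf₁_one : ∫ z₁, f₁ z₁ ∂μ₁ = 1) (hf₁_pos : ∀ᵐ z₁ ∂μ₁, 0 < f₁ z₁) :
    -- φ₁(f) has the additively separable exponential-tilt form μ-a.e.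
    (∀ᵐ z : A × B ∂(μ₁.prod μ₂),
      f₁ z.1 * (exp (a z.1 + b z.2) * fw z)
          / (∫ z₂, exp (a z.1 + b z₂) * fw (z.1, z₂) ∂μ₂)
        = exp ((log (f₁ z.1) - log (∫ z₂, exp (b z₂) * fw (z.1, z₂) ∂μ₂)) + b z.2)
            * fw z)
    -- and Π₁φ₁(f) = f₁ μ₁-a.e.
    ∧ (∀ᵐ z₁ ∂μ₁,
        (∫ z₂, f₁ z₁ * (exp (a z₁ + b z₂) * fw (z₁, z₂))
            / (∫ y, exp (a z₁ + b y) * fw (z₁, y) ∂μ₂) ∂μ₂) = f₁ z₁) := by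
  have hfac : ∀ z₁, ∫ z₂, exp (a z₁ + b z₂) * fw (z₁, z₂) ∂μ₂
      = exp (a z₁) * ∫ z₂, exp (b z₂) * fw (z₁, z₂) ∂μ₂ := by
    intro z₁
    rw [← integral_const_mul]
    simp only [exp_add, mul_assoc]
  constructor
  · have hpos : ∀ᵐ z : A × B ∂(μ₁.prod μ₂), 0 < f₁ z.1 ∧
        0 < ∫ z₂, exp (a z.1 + b z₂) * fw (z.1, z₂) ∂μ₂ :=
      Measure.quasiMeasurePreserving_fst.ae (hf₁_pos.and hmarg_pos)
    filter_upwards [hpos] with z ⟨hz, hm⟩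
    rw [hfac] at hm ⊢
    have hI : 0 < ∫ z₂, exp (b z₂) * fw (z.1, z₂) ∂μ₂ :=
      pos_of_mul_pos_right hm (exp_pos _).le
    rw [exp_add, exp_add, exp_sub, exp_log hz, exp_log hI]
    have := (exp_pos (a z.1)).ne'
    field_simp
  · filter_upwards [hmarg_pos] with z₁ hm
    rw [integral_div, integral_const_mul, mul_div_assoc, div_self hm.ne', mul_one]
end

section
/- Let (A, μ₁) and (B, μ₂) be σ-finite measure spaces with μ₁(A) > 0 and μ₂(B) > 0, and let a, a' : A → ℝ and b, b' : B → ℝ be measurable functions such that a(z₁) + b(z₂) = a'(z₁) + b'(z₂) for μ₁ ⊗ μ₂-a.e. (z₁,z₂). Then there exists a constant c ∈ ℝ such that a = a' + c μ₁-a.e. and b = b' − c μ₂-a.e.; i.e., the additively separable components of a function on a product space are unique up to addition and subtraction of a constant. -/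
open MeasureTheory

/-- If `a(z₁) + b(z₂) = a'(z₁) + b'(z₂)` for `μ₁ ⊗ μ₂`-a.e. `(z₁,z₂)`,
with `μ₁`, `μ₂` nonzero σ-finite measures and `a, a', b, b'` measurable, then there is a
constant `c` with `a = a' + c` μ₁-a.e. and `b = b' − c` μ₂-a.e.; i.e., additively
separable components on a product space are unique up to a constant. -/
theorem additive_components_unique_up_to_constant
    {A B : Type*} [MeasurableSpace A] [MeasurableSpace B]
    (μ₁ : Measure A) (μ₂ : Measure B) [SigmaFinite μ₁] [SigmaFinite μ₂]
    (hμ₁ : μ₁ Set.univ ≠ 0) (hμ₂ : μ₂ Set.univ ≠ 0)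
    (a a' : A → ℝ) (b b' : B → ℝ)
    (ha : Measurable a) (ha' : Measurable a') (hb : Measurable b) (hb' : Measurable b')
    (heq : ∀ᵐ z : A × B ∂(μ₁.prod μ₂), a z.1 + b z.2 = a' z.1 + b' z.2) :
    ∃ c : ℝ, (∀ᵐ z₁ ∂μ₁, a z₁ = a' z₁ + c) ∧ (∀ᵐ z₂ ∂μ₂, b z₂ = b' z₂ - c) := by
  have : NeZero μ₁ := ⟨fun h => hμ₁ (by simp [h])⟩
  have : NeZero μ₂ := ⟨fun h => hμ₂ (by simp [h])⟩
  have hslice := Measure.ae_ae_of_ae_prod heq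
  -- One good slice `x₀`, available since `μ₁ ≠ 0`, determines the constant and settles `b`.
  obtain ⟨x₀, hx₀⟩ := hslice.exists
  have hbc : ∀ᵐ y ∂μ₂, b y = b' y - (a x₀ - a' x₀) := by
    filter_upwards [hx₀] with y hy
    linarith
  refine ⟨a x₀ - a' x₀, ?_, hbc⟩
  filter_upwards [hslice] with x hx
  -- Since `μ₂ ≠ 0`, the slice at `x` and the identity for `b` hold at a common point `y`.
  obtain ⟨y, hy, hby⟩ := (hx.and hbc).exists
  linarith
end

section
/- Let (Z, ν) be a σ-finite measure space, Θ ⊆ ℝ^q compact, θ₀ an interior point of Θ, and φ : Z × Θ → ℝ^q a function, measurable in z, such that φ(z,·) is twice continuously differentiable on Θ for every z, and ‖φ(z,θ)‖, ‖∂φ/∂θ'(z,θ)‖ and the second θ-derivatives of φ are bounded by a constant B uniformly over Z × Θ. Let f be a density with respect to ν such that ∫ φ(z,θ₀) f(z) dν(z) = 0 and the Jacobian matrix J := ∫ ∂φ/∂θ'(z,θ₀) f(z) dν(z) is nonsingular. Then there exist ε > 0 and C < ∞ such that for every density ĝ with respect to ν with ‖ĝ − f‖_{L¹(ν)} ≤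 ε and every θ̂ ∈ Θ with ‖θ̂ − θ₀‖ ≤ ε and ∫ φ(z,θ̂) ĝ(z) dν(z) = 0, one has ‖θ̂ − θ₀‖ ≤ C·‖ĝ − f‖_{L¹(ν)}. -/
/-!
Write `h = θhat - θ₀`, `d = ∫ |g - f|` and `J` for the Jacobian. A second-order Taylor bound on a
ball around `θ₀` contained in `Θ` (`taylor_bound`), integrated against the density `f`, gives
`‖∫ f φ(·,θhat) - J h‖ ≤ |B| ‖h‖²`, by the moment condition at `θ₀`. The moment condition at `θhat`
turns `∫ f φ(·,θhat)` into `∫ (f - g) φ(·,θhat)`, of norm at most `|B| d`. As `J` is injective in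
finite dimension, `‖h‖ ≤ K ‖J h‖` for some `K > 0`, so `‖h‖ ≤ K |B| d + K |B| ‖h‖²`; for
`‖h‖ ≤ 1 / (2 K (|B| + 1))` the quadratic term is absorbed by the left-hand side.

Measurability of `z ↦ ∂φ/∂θ(z,θ₀)` is not needed separately: if the Jacobian integrand were not
integrable, `J` would be `0` by convention, and bijectivity would force the parameter space to be
trivial.
-/


open MeasureTheory

/-- Second-order Taylor bound on a ball inside `s`. No unique-differentiability of `s` is needed,
since at interior points derivatives within `s` are ordinary derivatives. -/
lemma taylor_bound {E F : Type*} [NormedAddCommGroup E] [NormedSpace ℝ E]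
    [NormedAddCommGroup F] [NormedSpace ℝ F] {s : Set E} {x₀ x : E} {r B : ℝ}
    (hr : Metric.ball x₀ r ⊆ s) {u : E → F} (hu : ContDiffOn ℝ 2 u s)
    (hB : ∀ y ∈ s, ‖iteratedFDerivWithin ℝ 2 u s y‖ ≤ B) (hx : ‖x - x₀‖ < r) :
    ‖u x - u x₀ - fderivWithin ℝ u s x₀ (x - x₀)‖ ≤ B * ‖x - x₀‖ ^ 2 := by
  have hnhds : ∀ y ∈ Metric.ball x₀ r, s ∈ nhds y := fun y hy =>
    Filter.mem_of_superset (Metric.isOpen_ball.mem_nhds hy) hr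
  have hcd : ∀ y ∈ Metric.ball x₀ r, ContDiffAt ℝ 2 u y := fun y hy =>
    hu.contDiffAt (hnhds y hy)
  have hr0 : 0 < r := (norm_nonneg _).trans_lt hx
  have hx₀ : x₀ ∈ Metric.ball x₀ r := Metric.mem_ball_self hr0
  have hB2 : ∀ y ∈ Metric.ball x₀ r, ‖fderiv ℝ (fderiv ℝ u) y‖ ≤ B := by
    intro y hy
    have h1 := hB y (hr hy)
    have h2 : iteratedFDerivWithin ℝ 2 u s y = iteratedFDeriv ℝ 2 u y := by
      rw [← iteratedFDerivWithin_univ]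
      exact iteratedFDerivWithin_congr_set
        (Filter.eventuallyEq_univ.2 (hnhds y hy)) 2
    rwa [h2, ← norm_iteratedFDeriv_fderiv, norm_iteratedFDeriv_one] at h1
  have hB0 : 0 ≤ B := (norm_nonneg _).trans (hB _ (hr hx₀))
  have hlip : ∀ y ∈ Metric.ball x₀ r, ‖fderiv ℝ u y - fderiv ℝ u x₀‖ ≤ B * ‖y - x₀‖ := by
    intro y hy
    refine (convex_ball x₀ r).norm_image_sub_le_of_norm_fderiv_le (𝕜 := ℝ) ?_ hB2 hx₀ hy
    intro w hw
    exact ((hcd w hw).fderiv_right (m := 1) (by norm_num)).differentiableAt (by norm_num)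
  rw [fderivWithin_of_mem_nhds (hnhds x₀ hx₀)]
  -- The mean value inequality is applied on the closed ball of radius `‖x - x₀‖`, where the
  -- derivative of the remainder is at most `B * ‖x - x₀‖`.
  have hsub : Metric.closedBall x₀ ‖x - x₀‖ ⊆ Metric.ball x₀ r :=
    Metric.closedBall_subset_ball hx
  have := (convex_closedBall x₀ ‖x - x₀‖).norm_image_sub_le_of_norm_fderiv_le' (𝕜 := ℝ)
    (f := u) (φ := fderiv ℝ u x₀) (C := B * ‖x - x₀‖) (x := x₀) (y := x)
    (fun y hy => (hcd y (hsub hy)).differentiableAt (by norm_num))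
    (fun y hy => (hlip y (hsub hy)).trans
      (mul_le_mul_of_nonneg_left (mem_closedBall_iff_norm.1 hy) hB0))
    (Metric.mem_closedBall_self (norm_nonneg _)) (mem_closedBall_iff_norm.2 le_rfl)
  linarith [this, sq (‖x - x₀‖), mul_assoc B ‖x - x₀‖ ‖x - x₀‖]

/-- Local Lipschitz stability of the moment estimator: if `φ(z,·)` is
twice continuously differentiable on the compact set `Θ` with `φ`, its first and second
θ-derivatives uniformly bounded by `B`, `θ₀` is interior to `Θ`, `∫ φ(z,θ₀) f dν = 0`,
and the Jacobian `J = ∫ ∂φ/∂θ'(z,θ₀) f dν` is nonsingular, then there are `ε > 0` and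
`C < ∞` such that any density `ĝ` with `‖ĝ−f‖_{L¹} ≤ ε` and any `θ̂ ∈ Θ` with
`‖θ̂−θ₀‖ ≤ ε` solving `∫ φ(z,θ̂) ĝ dν = 0` satisfies `‖θ̂−θ₀‖ ≤ C·‖ĝ−f‖_{L¹}`. -/
theorem moment_estimator_local_lipschitz_stability
    {Z : Type*} [MeasurableSpace Z] (ν : Measure Z) [SigmaFinite ν]
    {q : ℕ} (Θ : Set (EuclideanSpace ℝ (Fin q))) (hΘ : IsCompact Θ)
    (θ₀ : EuclideanSpace ℝ (Fin q)) (hθ₀ : θ₀ ∈ interior Θ)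
    (φ : Z → EuclideanSpace ℝ (Fin q) → EuclideanSpace ℝ (Fin q))
    (hφ_meas : ∀ θ ∈ Θ, Measurable (fun z => φ z θ))
    (hφ_smooth : ∀ z, ContDiffOn ℝ 2 (φ z) Θ)
    (B : ℝ)
    (hφ_bdd : ∀ z, ∀ θ ∈ Θ, ‖φ z θ‖ ≤ B)
    (hDφ_bdd : ∀ z, ∀ θ ∈ Θ, ‖fderivWithin ℝ (φ z) Θ θ‖ ≤ B)
    (hD2φ_bdd : ∀ z, ∀ θ ∈ Θ, ‖iteratedFDerivWithin ℝ 2 (φ z) Θ θ‖ ≤ B)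
    (f : Z → ℝ) (hf_meas : Measurable f) (hf_nonneg : ∀ z, 0 ≤ f z)
    (hf_one : ∫ z, f z ∂ν = 1)
    -- the moment condition holds at θ₀ under f
    (hmom : ∫ z, f z • φ z θ₀ ∂ν = 0)
    -- the Jacobian matrix J is nonsingular
    (hJ : Function.Bijective
      (⇑(∫ z, f z • fderivWithin ℝ (φ z) Θ θ₀ ∂ν :
          EuclideanSpace ℝ (Fin q) →L[ℝ] EuclideanSpace ℝ (Fin q)))) :
    ∃ ε > 0, ∃ C : ℝ,
      ∀ g : Z → ℝ, Measurable g → (∀ z, 0 ≤ g z) → (∫ z, g z ∂ν) = 1 →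
        (∫ z, |g z - f z| ∂ν) ≤ ε →
        ∀ θhat ∈ Θ, ‖θhat - θ₀‖ ≤ ε →
          (∫ z, g z • φ z θhat ∂ν) = 0 →
          ‖θhat - θ₀‖ ≤ C * ∫ z, |g z - f z| ∂ν := by
  by_cases hint : Integrable (fun z => f z • fderivWithin ℝ (φ z) Θ θ₀) ν
  swap
  · -- The Jacobian is then `0` by convention, and injective, so the space is a point.
    rw [integral_undef hint] at hJ
    refine ⟨1, one_pos, 0, fun g _ _ _ _ θ _ _ _ => ?_⟩
    have : θ = θ₀ := hJ.1 (by simp)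
    simp [this]
  set J := ∫ z, f z • fderivWithin ℝ (φ z) Θ θ₀ ∂ν with hJdef
  obtain ⟨K, hK0, hK⟩ : ∃ K > 0, AntilipschitzWith K J :=
    J.toLinearMap.exists_antilipschitzWith (LinearMap.ker_eq_bot.2 hJ.1)
  have hK0' : (0 : ℝ) < K := hK0
  obtain ⟨r, hr0, hr⟩ := Metric.mem_nhds_iff.1 (mem_interior_iff_mem_nhds.1 hθ₀)
  have hfi : Integrable f ν := by
    by_contra h
    rw [integral_undef h] at hf_one
    exact zero_ne_one hf_one
  have hφi : ∀ k : Z → ℝ, Integrable k ν → ∀ θ ∈ Θ, Integrable (fun z => k z • φ z θ) ν :=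
    fun k hk θ hθ => hk.smul_bdd |B| (hφ_meas θ hθ).aestronglyMeasurable
      (Filter.Eventually.of_forall fun z => (hφ_bdd z θ hθ).trans (le_abs_self B))
  have hB1 : 0 < |B| + 1 := by positivity
  refine ⟨min (r / 2) (1 / (2 * K * (|B| + 1))), by positivity, 2 * K * |B|, ?_⟩
  intro g _ _ hg_one _ θ hθ hθε hgmom
  have hgi : Integrable g ν := by
    by_contra h
    rw [integral_undef h] at hg_one
    exact zero_ne_one hg_one
  have hθr : ‖θ - θ₀‖ < r := by
    have := hθε.trans (min_le_left _ _)
    linarith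
  have hsmall : ‖θ - θ₀‖ * (2 * K * (|B| + 1)) ≤ 1 := by
    have := hθε.trans (min_le_right _ _)
    rwa [le_div_iff₀ (by positivity)] at this
  have hrem : ‖(∫ z, f z • φ z θ ∂ν) - J (θ - θ₀)‖ ≤ |B| * ‖θ - θ₀‖ ^ 2 := by
    have hJi : Integrable (fun z => f z • fderivWithin ℝ (φ z) Θ θ₀ (θ - θ₀)) ν :=
      hint.apply_continuousLinearMap (θ - θ₀)
    have hJapp : J (θ - θ₀) = ∫ z, f z • fderivWithin ℝ (φ z) Θ θ₀ (θ - θ₀) ∂ν :=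
      ContinuousLinearMap.integral_apply hint (θ - θ₀)
    have hi1 := hφi f hfi θ hθ
    have hi0 := hφi f hfi θ₀ (interior_subset hθ₀)
    have heq : (∫ z, f z • φ z θ ∂ν) - J (θ - θ₀)
        = ∫ z, f z • (φ z θ - φ z θ₀ - fderivWithin ℝ (φ z) Θ θ₀ (θ - θ₀)) ∂ν := by
      have hi10 : Integrable (fun z => f z • φ z θ - f z • φ z θ₀) ν := hi1.sub hi0
      simp only [smul_sub]
      rw [integral_sub hi10 hJi, integral_sub hi1 hi0, hmom, sub_zero, hJapp]
    rw [heq]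
    calc _ ≤ ∫ z, f z * (|B| * ‖θ - θ₀‖ ^ 2) ∂ν := by
          refine norm_integral_le_of_norm_le (hfi.mul_const _)
            (Filter.Eventually.of_forall fun z => ?_)
          rw [norm_smul, Real.norm_of_nonneg (hf_nonneg z)]
          refine mul_le_mul_of_nonneg_left ?_ (hf_nonneg z)
          exact taylor_bound hr (hφ_smooth z)
            (fun y hy => (hD2φ_bdd z y hy).trans (le_abs_self B)) hθr
      _ = _ := by rw [integral_mul_const, hf_one, one_mul]
  have hpert : ‖∫ z, f z • φ z θ ∂ν‖ ≤ |B| * ∫ z, |g z - f z| ∂ν := by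
    have heq : ∫ z, f z • φ z θ ∂ν = -∫ z, (g z - f z) • φ z θ ∂ν := by
      simp only [sub_smul]
      rw [integral_sub (hφi g hgi θ hθ) (hφi f hfi θ hθ), hgmom, zero_sub, neg_neg]
    rw [heq, norm_neg, ← integral_const_mul]
    refine norm_integral_le_of_norm_le ((hgi.sub hfi).abs.const_mul _)
      (Filter.Eventually.of_forall fun z => ?_)
    rw [norm_smul, Real.norm_eq_abs, mul_comm]
    exact mul_le_mul_of_nonneg_right ((hφ_bdd z θ hθ).trans (le_abs_self B)) (abs_nonneg _)
  have hlow : ‖θ - θ₀‖ ≤ K * ‖J (θ - θ₀)‖ := by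
    have := hK.le_mul_dist θ θ₀
    rwa [dist_eq_norm, dist_eq_norm, ← map_sub] at this
  have htri : ‖J (θ - θ₀)‖ ≤ |B| * (∫ z, |g z - f z| ∂ν) + |B| * ‖θ - θ₀‖ ^ 2 := by
    have := norm_sub_le (∫ z, f z • φ z θ ∂ν) ((∫ z, f z • φ z θ ∂ν) - J (θ - θ₀))
    rw [sub_sub_cancel] at this
    linarith
  have h1 : ‖θ - θ₀‖ ≤ K * (|B| * (∫ z, |g z - f z| ∂ν) + |B| * ‖θ - θ₀‖ ^ 2) :=
    hlow.trans (mul_le_mul_of_nonneg_left htri hK0'.le)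
  have h2 := mul_le_mul_of_nonneg_left hsmall (norm_nonneg (θ - θ₀))
  have h3 : 0 ≤ (K : ℝ) * ‖θ - θ₀‖ ^ 2 := by positivity
  nlinarith
end

section
/- Let (Z, ν) be a σ-finite measure space, Θ ⊆ ℝ^q compact, and φ : Z × Θ → ℝ^q a function, measurable in z and continuous in θ, with ‖φ(z,θ)‖ ≤ B uniformly over Z × Θ. Let f be a density with respect to ν such that θ₀ ∈ Θ is the unique solution in Θ of ∫ φ(z,θ) f(z) dν(z) = 0. Then for every ε > 0 there exists δ > 0 such that for every density ĝ with respect to ν with ‖ĝ − f‖_{L¹(ν)} < δ, every θ̂ ∈ Θ satisfying ∫ φ(z,θ̂) ĝ(z) dν(z) = 0 must satisfy ‖θ̂ − θ₀‖ < ε. -/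
open MeasureTheory

/-!
The population moment map `M θ = ∫ f • φ(·, θ) dν` is continuous on `Θ` by dominated convergence
(the dominating function is `B f`) and vanishes only at `θ₀`. On the compact set
`Θ \ ball θ₀ ε` its norm is therefore bounded below by some `m > 0`. If `θhat ∈ Θ` solves the
moment equation for `g`, then `‖M θhat‖ = ‖∫ (f - g) • φ(·, θhat) dν‖ ≤ B ‖g - f‖_{L¹}`, which is
below `m` once `‖g - f‖_{L¹} < m / (|B| + 1)`; hence `θhat` lies in the ball.
-/

/-- Consistency of the moment estimator: if `φ` is bounded, measurable
in `z`, continuous in `θ` on the compact set `Θ`, and `θ₀ ∈ Θ` is the unique solution in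
`Θ` of `∫ φ(z,θ) f dν = 0`, then for every `ε > 0` there is `δ > 0` such that for any
density `ĝ` with `‖ĝ−f‖_{L¹(ν)} < δ`, every `θ̂ ∈ Θ` with `∫ φ(z,θ̂) ĝ dν = 0`
satisfies `‖θ̂ − θ₀‖ < ε`. -/
theorem moment_estimator_consistency
    {Z : Type*} [MeasurableSpace Z] (ν : Measure Z) [SigmaFinite ν]
    {q : ℕ} (Θ : Set (EuclideanSpace ℝ (Fin q))) (hΘ : IsCompact Θ)
    (φ : Z → EuclideanSpace ℝ (Fin q) → EuclideanSpace ℝ (Fin q))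
    (hφ_meas : ∀ θ ∈ Θ, Measurable (fun z => φ z θ))
    (hφ_cont : ∀ z, ContinuousOn (φ z) Θ)
    (B : ℝ) (hφ_bdd : ∀ z, ∀ θ ∈ Θ, ‖φ z θ‖ ≤ B)
    (f : Z → ℝ) (hf_meas : Measurable f) (hf_nonneg : ∀ z, 0 ≤ f z)
    (hf_one : ∫ z, f z ∂ν = 1)
    (θ₀ : EuclideanSpace ℝ (Fin q)) (hθ₀ : θ₀ ∈ Θ)
    (hmom : ∫ z, f z • φ z θ₀ ∂ν = 0)
    -- θ₀ is the unique solution in Θ of the population moment condition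
    (huniq : ∀ θ ∈ Θ, (∫ z, f z • φ z θ ∂ν) = 0 → θ = θ₀) :
    ∀ ε > 0, ∃ δ > 0,
      ∀ g : Z → ℝ, Measurable g → (∀ z, 0 ≤ g z) → (∫ z, g z ∂ν) = 1 →
        (∫ z, |g z - f z| ∂ν) < δ →
        ∀ θhat ∈ Θ, (∫ z, g z • φ z θhat ∂ν) = 0 → ‖θhat - θ₀‖ < ε := by
  intro ε hε
  -- a non-integrable function would have Bochner integral 0
  have integrable_of_one : ∀ h : Z → ℝ, ∫ z, h z ∂ν = 1 → Integrable h ν := fun h hh =>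
    Integrable.of_integral_ne_zero (by rw [hh]; exact one_ne_zero)
  have integrable_smul : ∀ h : Z → ℝ, Integrable h ν → ∀ θ ∈ Θ,
      Integrable (fun z => h z • φ z θ) ν := fun h hh θ hθ =>
    hh.smul_bdd B (hφ_meas θ hθ).aestronglyMeasurable
      (Filter.Eventually.of_forall fun z => hφ_bdd z θ hθ)
  have hf := integrable_of_one f hf_one
  have hcont : ContinuousOn (fun θ => ∫ z, f z • φ z θ ∂ν) Θ := by
    refine continuousOn_of_dominated (bound := fun z => f z * B)
      (fun θ hθ => (integrable_smul f hf θ hθ).aestronglyMeasurable) ?_ (hf.mul_const B) ?_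
    · refine fun θ hθ => Filter.Eventually.of_forall fun z => ?_
      rw [norm_smul, Real.norm_of_nonneg (hf_nonneg z)]
      exact mul_le_mul_of_nonneg_left (hφ_bdd z θ hθ) (hf_nonneg z)
    · exact Filter.Eventually.of_forall fun z => (hφ_cont z).const_smul (f z)
  have hK : IsCompact (Θ \ Metric.ball θ₀ ε) := hΘ.diff Metric.isOpen_ball
  obtain ⟨m, hm, hmle⟩ := hK.exists_forall_le' (a := (0 : ℝ))
    (hcont.norm.mono Set.sdiff_subset) (by
      rintro θ ⟨hθ, hball⟩
      refine norm_pos_iff.mpr fun h0 => hball ?_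
      rw [huniq θ hθ h0]
      exact Metric.mem_ball_self hε)
  have hB : 0 < |B| + 1 := by positivity
  refine ⟨m / (|B| + 1), div_pos hm hB, fun g _ _ hg_one hgf θ hθ hgθ => ?_⟩
  have hg := integrable_of_one g hg_one
  by_contra hfar
  have hlow : m ≤ ‖∫ z, f z • φ z θ ∂ν‖ :=
    hmle θ ⟨hθ, fun hb => hfar (by rwa [← dist_eq_norm])⟩
  have heq : ∫ z, f z • φ z θ ∂ν = -∫ z, (g z - f z) • φ z θ ∂ν := by
    simp_rw [sub_smul]
    rw [integral_sub (integrable_smul g hg θ hθ) (integrable_smul f hf θ hθ), hgθ, zero_sub,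
      neg_neg]
  have hup : ‖∫ z, f z • φ z θ ∂ν‖ ≤ (∫ z, |g z - f z| ∂ν) * (|B| + 1) := by
    rw [heq, norm_neg, ← integral_mul_const]
    refine norm_integral_le_of_norm_le ((hg.sub hf).abs.mul_const _)
      (Filter.Eventually.of_forall fun z => ?_)
    rw [norm_smul, Real.norm_eq_abs]
    refine mul_le_mul_of_nonneg_left ?_ (abs_nonneg _)
    linarith [hφ_bdd z θ hθ, le_abs_self B]
  rw [lt_div_iff₀ hB] at hgf
  linarith
end
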